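/- Let F(x) be analytic near 1 with Taylor expansion F(x) = ∑_{n≥0} a_n (x-1)^n, and let r ≥ 1. Then for x₁ in a punctured neighborhood of 1, the limit as x₂,...,x_{r+1} → 1 of the sum ∑_{j=1}^{r+1} F(x_j)/∏_{i≠j}(x_j - x_i) equals (F(x₁) - a₀ - a₁(x₁-1) - ... - a_{r-1}(x₁-1)^{r-1})/(x₁-1)^r. -/

import Mathlib

open scoped BigOperators Topology

open Metric in
/-- Cauchy bound for the divided difference of `g` at the nodes `y`. -/
lemma dd_bound_aux (r : ℕ) (hr : 1 ≤ r) (g : ℂ → ℂ) (ρ C : ℝ) (hρ : 0 < ρ) 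
    (hg : DifferentiableOn ℂ g (closedBall 1 ρ))
    (hb : ∀ z ∈ sphere (1 : ℂ) ρ, ‖g z‖ ≤ C * ρ ^ r)
    (y : Fin r → ℂ) (hy : Function.Injective y) (hy1 : ∀ j, y j ∈ ball (1 : ℂ) (ρ / 2)) :
    ‖∑ j, g (y j) / ∏ i ∈ Finset.univ.erase j, (y j - y i)‖ ≤ ρ * (C * 2 ^ r) := by
  have hyb : ∀ j, y j ∈ ball (1 : ℂ) ρ := fun j => ball_subset_ball (by linarith) (hy1 j)
  have hne : ∀ z ∈ sphere (1 : ℂ) ρ, ∀ j, z - y j ≠ 0 := by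
    intro z hz j h
    rw [sub_eq_zero] at h
    have h1 := hyb j
    rw [← h] at h1
    simp only [mem_sphere, mem_ball] at hz h1
    linarith
  have hlow : ∀ z ∈ sphere (1 : ℂ) ρ, ∀ j, ρ / 2 ≤ ‖z - y j‖ := by
    intro z hz j
    have h1 := hy1 j
    simp only [mem_sphere, mem_ball] at hz h1
    have h2 := dist_triangle z (y j) 1
    rw [← dist_eq_norm]
    linarith
  have hci : ∀ j, CircleIntegrable (fun z => (Lagrange.nodalWeight Finset.univ y j) •
      ((z - y j)⁻¹ • g z)) 1 ρ := by
    intro j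
    apply ContinuousOn.circleIntegrable hρ.le
    simp only [smul_eq_mul]
    refine ContinuousOn.mul continuousOn_const (ContinuousOn.mul ?_ ?_)
    · exact ContinuousOn.inv₀ (by fun_prop) (fun z hz => hne z hz j)
    · exact hg.continuousOn.mono sphere_subset_closedBall
  have key : ∑ j, g (y j) / ∏ i ∈ Finset.univ.erase j, (y j - y i) =
      (2 * Real.pi * Complex.I : ℂ)⁻¹ • ∮ z in C(1, ρ), (∏ j, (z - y j))⁻¹ * g z := by
    have e1 : (∮ z in C(1, ρ), (∏ j, (z - y j))⁻¹ * g z) = 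
        ∮ z in C(1, ρ), ∑ j, (Lagrange.nodalWeight Finset.univ y j) • ((z - y j)⁻¹ • g z) := by
      apply circleIntegral.integral_congr hρ.le
      intro z hz
      have : Nonempty (Fin r) := ⟨⟨0, hr⟩⟩
      have h := Lagrange.eval_interpolate_not_at_node (s := Finset.univ) (v := y) (x := z) 1
        (fun i _ => sub_ne_zero.1 (hne z hz i))
      rw [Lagrange.interpolate_one hy.injOn Finset.univ_nonempty, Lagrange.eval_nodal] at h
      simp only [Polynomial.eval_one, Pi.one_apply, mul_one] at h
      have h3 := eq_inv_of_mul_eq_one_right h.symm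
      simp only [smul_eq_mul, ← mul_assoc]
      rw [← Finset.sum_mul, h3]
    rw [e1, circleIntegral.integral_fun_sum (fun j _ => hci j), Finset.smul_sum]
    refine Finset.sum_congr rfl fun j _ => ?_
    rw [circleIntegral.integral_smul, smul_comm,
      (hg.diffContOnCl_ball subset_rfl).two_pi_i_inv_smul_circleIntegral_sub_inv_smul (hyb j)]
    simp [Lagrange.nodalWeight, div_eq_mul_inv, mul_comm]
  rw [key]
  apply circleIntegral.norm_two_pi_i_inv_smul_integral_le_of_norm_le_const hρ.le
  intro z hz
  rw [norm_mul, norm_inv, norm_prod]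
  have hp : (ρ / 2) ^ r ≤ ∏ j, ‖z - y j‖ := by
    have := Finset.prod_le_prod (s := Finset.univ) (f := fun _ : Fin r => ρ / 2)
      (g := fun j => ‖z - y j‖) (fun _ _ => by positivity) (fun j _ => hlow z hz j)
    rwa [Finset.prod_const, Finset.card_univ, Fintype.card_fin] at this
  have hp0 : 0 < (ρ / 2) ^ r := by positivity
  calc _ ≤ ((ρ / 2) ^ r)⁻¹ * (C * ρ ^ r) := by
        gcongr
        exact hb z hz
    _ = C * 2 ^ r := by
        rw [div_pow]
        field_simp

/-- Divided differences of a function vanishing to order `r` tend to zero. -/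
lemma dd_tendsto_zero_aux (r : ℕ) (hr : 1 ≤ r) (g : ℂ → ℂ) (hg : AnalyticAt ℂ g 1)
    (hO : g =O[𝓝 1] fun z => ‖z - 1‖ ^ r) (s : Set (Fin r → ℂ))
    (hs : ∀ y ∈ s, Function.Injective y) :
    Filter.Tendsto (fun y : Fin r → ℂ => ∑ j, g (y j) / ∏ i ∈ Finset.univ.erase j, (y j - y i))
      (𝓝[s] (fun _ => 1)) (𝓝 0) := by
  obtain ⟨C, hC0, hC⟩ := hO.exists_pos
  have h1 := hC.bound
  have h2 := hg.eventually_analyticAt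
  obtain ⟨δ, hδ, hball⟩ := Metric.eventually_nhds_iff_ball.1 (h1.and h2)
  rw [Metric.tendsto_nhds]
  intro ε hε
  obtain ⟨ρ, hρ0, hρδ, hρε⟩ : ∃ ρ : ℝ, 0 < ρ ∧ ρ < δ ∧ ρ * (C * 2 ^ r) < ε := by
    refine ⟨min (δ / 2) (ε / (C * 2 ^ r) / 2), by positivity, ?_, ?_⟩
    · exact (min_le_left _ _).trans_lt (by linarith)
    · have hK : 0 < C * 2 ^ r := by positivity
      calc _ ≤ (ε / (C * 2 ^ r) / 2) * (C * 2 ^ r) := by gcongr; exact min_le_right _ _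
        _ = ε / 2 := by field_simp
        _ < ε := by linarith
  have hnb : Metric.ball (fun _ : Fin r => (1 : ℂ)) (ρ / 2) ∈ 𝓝[s] (fun _ : Fin r => (1 : ℂ)) :=
    mem_nhdsWithin_of_mem_nhds (Metric.ball_mem_nhds _ (by positivity))
  filter_upwards [hnb, self_mem_nhdsWithin] with y hy hys
  rw [dist_zero_right]
  refine (dd_bound_aux r hr g ρ C hρ0 ?_ ?_ y (hs y hys) ?_).trans_lt hρε
  · intro z hz
    exact (hball z (Metric.closedBall_subset_ball hρδ hz)).2.differentiableAt.differentiableWithinAt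
  · intro z hz
    have := (hball z (Metric.closedBall_subset_ball hρδ (Metric.sphere_subset_closedBall hz))).1
    rw [mem_sphere_iff_norm] at hz
    simpa [hz, abs_of_pos hρ0] using this
  · intro j
    exact (dist_pi_lt_iff (by positivity)).1 hy j

/-- For `F` analytic near `1` with Taylor coefficients `a_i = F^{(i)}(1)/i!`, and fixed
`x₁ ≠ 1` in a neighborhood of `1`, the limit as `x₂,…,x_{r+1} → 1` of
`∑_j F(x_j)/∏_{i≠j}(x_j - x_i)` is the `r`-th Taylor remainder of `F` divided by `(x₁-1)^r`. -/
theorem sum_partial_fractions_limit (r : ℕ) (hr : 1 ≤ r) (F : ℂ → ℂ)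
    (U : Set ℂ) (hU : IsOpen U) (h1U : (1 : ℂ) ∈ U)
    (hF : AnalyticOnNhd ℂ F U)
    (x₁ : ℂ) (hx₁U : x₁ ∈ U) (hx₁ : x₁ ≠ 1) :
    Filter.Tendsto
      (fun y : Fin r → ℂ =>
        let v : Fin (r + 1) → ℂ := Fin.cons x₁ y
        ∑ j : Fin (r + 1),
          F (v j) / ∏ i ∈ Finset.univ.erase j, (v j - v i))
      (𝓝[{y : Fin r → ℂ | Function.Injective (Fin.cons x₁ y : Fin (r + 1) → ℂ)}] (fun _ => 1))
      (𝓝 ((F x₁ - ∑ i ∈ Finset.range r,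
              (iteratedDeriv i F 1 / (Nat.factorial i : ℂ)) * (x₁ - 1) ^ i) / (x₁ - 1) ^ r)) := by
  classical
  set P : Polynomial ℂ := ∑ i ∈ Finset.range r,
    Polynomial.C (iteratedDeriv i F 1 / (Nat.factorial i : ℂ)) *
      (Polynomial.X - Polynomial.C 1) ^ i with hP
  have hPe : ∀ x, P.eval x = ∑ i ∈ Finset.range r,
      (iteratedDeriv i F 1 / (Nat.factorial i : ℂ)) * (x - 1) ^ i := by
    intro x
    simp [hP, Polynomial.eval_finsetSum]
  have hPd : P.degree < r := by
    rw [← Polynomial.mem_degreeLT]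
    refine Submodule.sum_mem _ fun i hi => ?_
    rw [Polynomial.mem_degreeLT]
    rw [← Polynomial.smul_eq_C_mul]
    refine (Polynomial.degree_smul_le _ _).trans_lt ?_
    rw [Polynomial.degree_pow, Polynomial.degree_X_sub_C]
    simpa using hi
  set R : ℂ → ℂ := fun z => F z - P.eval z with hR
  have hRa : AnalyticAt ℂ R 1 := by
    apply (hF 1 h1U).sub
    exact (Polynomial.differentiable P).analyticAt 1
  have hRO : R =O[𝓝 1] fun z => ‖z - 1‖ ^ r := by
    have h := (hF 1 h1U).hasFPowerSeriesAt.isBigO_sub_partialSum_pow r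
    have ht : Filter.Tendsto (fun z : ℂ => z - 1) (𝓝 1) (𝓝 0) := by
      have : Continuous fun z : ℂ => z - 1 := by fun_prop
      simpa using this.tendsto 1
    have h' := h.comp_tendsto ht
    refine h'.congr' (Filter.Eventually.of_forall fun z => ?_) (Filter.EventuallyEq.refl _ _)
    simp only [Function.comp, hR, hPe, add_sub_cancel]
    congr 1
    simp [FormalMultilinearSeries.partialSum, mul_comm]
  set g : ℂ → ℂ := fun z => R z / (z - x₁) with hgdef
  have hx' : (1 : ℂ) - x₁ ≠ 0 := sub_ne_zero.2 hx₁.symm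
  have hia : AnalyticAt ℂ (fun z : ℂ => (z - x₁)⁻¹) 1 := 
    (analyticAt_id.sub analyticAt_const).inv hx'
  have hga : AnalyticAt ℂ g 1 := by
    simp only [hgdef, div_eq_mul_inv]
    exact hRa.mul hia
  have hgO : g =O[𝓝 1] fun z => ‖z - 1‖ ^ r := by
    have h := hRO.mul (hia.continuousAt.tendsto.isBigO_one ℝ)
    simpa [hgdef, div_eq_mul_inv] using h
  have hinj : ∀ y ∈ {y : Fin r → ℂ | Function.Injective (Fin.cons x₁ y : Fin (r + 1) → ℂ)},
      Function.Injective y := fun y hy => (Fin.cons_injective_iff.1 hy).2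
  have hlim2 := dd_tendsto_zero_aux r hr g hga hgO _ hinj
  have hlim1 : Filter.Tendsto (fun y : Fin r → ℂ => R x₁ / ∏ i, (x₁ - y i))
      (𝓝[{y : Fin r → ℂ | Function.Injective (Fin.cons x₁ y : Fin (r + 1) → ℂ)}] (fun _ => 1))
      (𝓝 (R x₁ / (x₁ - 1) ^ r)) := by
    apply Filter.Tendsto.mono_left _ nhdsWithin_le_nhds
    apply Filter.Tendsto.div tendsto_const_nhds _ (pow_ne_zero _ (sub_ne_zero.2 hx₁))
    have : Continuous fun y : Fin r → ℂ => ∏ i, (x₁ - y i) := by fun_prop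
    simpa using this.tendsto (fun _ => 1)
  have hlim := hlim1.add hlim2
  rw [add_zero] at hlim
  simp only [hR, hPe] at hlim
  refine hlim.congr' ?_
  filter_upwards [self_mem_nhdsWithin] with y hy
  have hy : Function.Injective (Fin.cons x₁ y : Fin (r + 1) → ℂ) := hy
  have hz := Lagrange.coeff_eq_sum (s := Finset.univ) hy.injOn (P := P)
    (by simpa using hPd.trans (by exact_mod_cast Nat.lt_succ_self r))
  have hc : P.coeff (Finset.card (Finset.univ : Finset (Fin (r + 1))) - 1) = 0 := by
    apply Polynomial.coeff_eq_zero_of_degree_lt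
    simpa using hPd
  rw [hc] at hz
  have e : ∀ w : ℂ → ℂ, (∑ j : Fin (r + 1), w ((Fin.cons x₁ y : Fin (r + 1) → ℂ) j) /
      ∏ i ∈ Finset.univ.erase j, ((Fin.cons x₁ y : Fin (r + 1) → ℂ) j -
        (Fin.cons x₁ y : Fin (r + 1) → ℂ) i)) =
      w x₁ / ∏ i, (x₁ - y i) + ∑ j, w (y j) / (y j - x₁) /
        ∏ i ∈ Finset.univ.erase j, (y j - y i) := by
    intro w
    rw [Fin.sum_univ_succ]
    congr 1
    · rw [Fin.univ_succ, Finset.erase_cons]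
      simp
    · refine Finset.sum_congr rfl fun j _ => ?_
      have : (Finset.univ : Finset (Fin (r + 1))).erase j.succ =
          Finset.cons 0 ((Finset.univ.erase j).map (Fin.succEmb r)) (by simp [Fin.succ_ne_zero]) := by
        ext i
        refine Fin.cases ?_ (fun i => ?_) i
        · simp [(Fin.succ_ne_zero j).symm]
        · simp [Fin.succ_ne_zero]
      rw [this, Finset.prod_cons, Finset.prod_map]
      simp [div_div]
  have e2 := e F
  have e3 := e (fun z => P.eval z)
  rw [← hz] at e3
  show _ = ∑ j : Fin (r + 1), F ((Fin.cons x₁ y : Fin (r + 1) → ℂ) j) / _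
  rw [e2]
  rw [← sub_zero (F x₁ / _ + _), e3]
  simp only [hgdef, hR, hPe, sub_div, Finset.sum_sub_distrib]
  ring
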